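/- On ℝ^{2n+1} with coordinates (x^α, y_α, z) and functions F^α_β = F^β_α depending only on the x^α and z, the frame e_α = ∂_{x^α} − Σ_ω F^ω_α ∂_{y_ω}, e_{n+α} = ∂_{y_α}, e_{2n+1} = ∂_z, with φe_α = −e_α, φe_{n+α} = e_{n+α}, φξ = 0, ξ = e_{2n+1}, η = dz, g(e_α, e_{n+α}) = g(e_{2n+1}, e_{2n+1}) = 1 (other pairings zero), defines an almost para-cosymplectic structure (dη = 0 and Φ = 2Σ dx^α ∧ dy_α is closed), and the eigendistribution D⁻ = span(e_α) is involutive if and only if F^β_α = ∂²H/∂x^α∂x^β for some function H depending only on the x^α and z. -/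

import Mathlib

noncomputable section

namespace Stmt19

open Finset

/-- Points (and tangent vectors) of ℝ^{2n+1} with coordinates `(x^α, y_α, z)`. -/
abbrev Pt (n : ℕ) := (Fin n → ℝ) × (Fin n → ℝ) × ℝ

/-- The coordinate vector `∂_{x^α}`. -/
def eaV (n : ℕ) (α : Fin n) : Pt n := ((Pi.single α 1 : Fin n → ℝ), 0, 0)

/-- The coordinate vector `∂_{y_α}` (= the frame vector `e_{n+α}`). -/
def enV (n : ℕ) (α : Fin n) : Pt n := (0, (Pi.single α 1 : Fin n → ℝ), 0)

/-- The coordinate vector `∂_z` (= `ξ`). -/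
def dzV (n : ℕ) : Pt n := (0, 0, 1)

/-- The frame fields `e_α = ∂_{x^α} − Σ_ω F^ω_α ∂_{y_ω}`. -/
def eaF (n : ℕ) (F : Fin n → Fin n → Pt n → ℝ) (α : Fin n) : Pt n → Pt n := fun p =>
  ((Pi.single α 1 : Fin n → ℝ), fun ω => -(F ω α p), 0)

/-- `η = dz`. -/
def etaP (n : ℕ) (v : Pt n) : ℝ := v.2.2

/-- The dual coframe `θ^α = dx^α`. -/
def thA (n : ℕ) (α : Fin n) (v : Pt n) : ℝ := v.1 α

/-- The dual coframe `θ^{n+α} = dy_α + Σ_ω F^α_ω dx^ω`. -/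
def thB (n : ℕ) (F : Fin n → Fin n → Pt n → ℝ) (α : Fin n) (p v : Pt n) : ℝ :=
  v.2.1 α + ∑ ω, F α ω p * v.1 ω

/-- The metric: `g(e_α, e_{n+α}) = g(e_{n+α}, e_α) = g(ξ, ξ) = 1`, other
pairings of frame vectors zero. -/
def gP (n : ℕ) (F : Fin n → Fin n → Pt n → ℝ) (p v w : Pt n) : ℝ :=
  (∑ α, (thA n α v * thB n F α p w + thB n F α p v * thA n α w)) + v.2.2 * w.2.2

/-- `φ e_α = −e_α`, `φ e_{n+α} = e_{n+α}`, `φ ξ = 0`. -/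
def phiP (n : ℕ) (F : Fin n → Fin n → Pt n → ℝ) (p v : Pt n) : Pt n :=
  (∑ α, thB n F α p v • enV n α) - (∑ α, thA n α v • eaF n F α p)

/-- The fundamental 2-form `Φ(X,Y) = g(X, φY)`. -/
def PhiForm (n : ℕ) (F : Fin n → Fin n → Pt n → ℝ) (p v w : Pt n) : ℝ :=
  gP n F p v (phiP n F p w)

/-- Lie bracket of vector fields. -/
def brk (n : ℕ) (X Y : Pt n → Pt n) : Pt n → Pt n := fun p =>
  fderiv ℝ Y p (X p) - fderiv ℝ X p (Y p)

/-!
In the coframe `θ^α = dx^α`, `θ^{n+α} = dy_α + ∑ F^α_ω dx^ω`, `η`, the endomorphism `φ` is diagonal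
with eigenvalues `-1`, `1`, `0`, which gives the algebraic identities; in
`Φ = ∑ (θ^α ⊗ θ^{n+α} - θ^{n+α} ⊗ θ^α)` the terms containing `F` cancel by symmetry. The bracket
`[e_α, e_β]` is a combination of the `∂_{y_ω}`, while `D⁻` is the common kernel of the `θ^{n+α}` and
`η`; hence `D⁻` is involutive iff the brackets vanish, i.e. iff for each `ω` and `z` the 1-form
`∑ F^ω_α dx^α` is closed. Then `F^ω_α = ∂_α G^ω`, the symmetry of `F` makes `∑ G^α dx^α` closed, and
a second primitive is `H`. The primitives are `∫₀¹ ω(t x, z) x dt`, which are smooth jointly in `x`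
and in the parameter `z`.
-/

open scoped Topology

section ParametricIntegral

universe u

theorem eventually_forall_mem_norm_le_of_continuous {X Y E : Type*} [TopologicalSpace X]
    [TopologicalSpace Y] [SeminormedAddCommGroup E] {f : X × Y → E} (hf : Continuous f) {K : Set Y}
    (hK : IsCompact K) (x₀ : X) : ∃ C, ∀ᶠ x in 𝓝 x₀, ∀ y ∈ K, ‖f (x, y)‖ ≤ C := by
  obtain ⟨C, hC⟩ := hK.exists_bound_of_continuousOn
    (hf.comp (Continuous.prodMk_right x₀)).continuousOn
  refine ⟨C + 1, hK.eventually_forall_of_forall_eventually fun y hy => ?_⟩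
  exact (hf.norm.continuousAt.eventually_lt_const
    ((hC y hy).trans_lt (lt_add_one C))).mono fun _ h => h.le

variable {P E : Type u} [NormedAddCommGroup P] [NormedSpace ℝ P]
  [NormedAddCommGroup E] [NormedSpace ℝ E]

theorem hasFDerivAt_intervalIntegral_of_contDiff {f : P × ℝ → E} (hf : ContDiff ℝ 1 f)
    (a b : ℝ) (p : P) :
    HasFDerivAt (fun p => ∫ t in a..b, f (p, t))
      (∫ t in a..b, (fderiv ℝ f (p, t)).comp (ContinuousLinearMap.inl ℝ P ℝ)) p := by
  have hslice (x : P) : Continuous fun t : ℝ => (x, t) := Continuous.prodMk_right x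
  have hf' : Continuous fun q : P × ℝ => (fderiv ℝ f q).comp (ContinuousLinearMap.inl ℝ P ℝ) :=
    (hf.continuous_fderiv one_ne_zero).clm_comp continuous_const
  obtain ⟨C, hC⟩ :=
    eventually_forall_mem_norm_le_of_continuous hf' (isCompact_uIcc (a := a) (b := b)) p
  exact intervalIntegral.hasFDerivAt_integral_of_dominated_of_fderiv_le
    (F := fun p t => f (p, t))
    (F' := fun p t => (fderiv ℝ f (p, t)).comp (ContinuousLinearMap.inl ℝ P ℝ)) hC
    (.of_forall fun x => (hf.continuous.comp (hslice x)).aestronglyMeasurable)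
    ((hf.continuous.comp (hslice p)).intervalIntegrable _ _)
    (hf'.comp (hslice p)).aestronglyMeasurable
    (.of_forall fun t ht x hx => hx t (Set.uIoc_subset_uIcc ht))
    intervalIntegrable_const
    (.of_forall fun t _ x _ => ((hf.differentiable one_ne_zero).differentiableAt.hasFDerivAt).comp x
      (hasFDerivAt_prodMk_left x t))

theorem contDiff_nat_intervalIntegral (m : ℕ) {f : P × ℝ → E} (hf : ContDiff ℝ m f) (a b : ℝ) :
    ContDiff ℝ m fun p => ∫ t in a..b, f (p, t) := by
  induction m generalizing E with
  | zero =>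
    exact contDiff_zero.2
      (intervalIntegral.continuous_parametric_intervalIntegral_of_continuous'
        (f := fun x t => f (x, t)) hf.continuous a b)
  | succ m ih =>
    have hderiv := hasFDerivAt_intervalIntegral_of_contDiff
      (hf.of_le (by exact_mod_cast Nat.le_add_left 1 m)) a b
    push_cast at hf ⊢
    refine contDiff_succ_iff_fderiv.2 ⟨fun p => (hderiv p).differentiableAt, by simp, ?_⟩
    rw [funext fun p => (hderiv p).fderiv]
    exact ih ((contDiff_succ_iff_fderiv.1 hf).2.2.clm_comp contDiff_const)

theorem contDiff_intervalIntegral {k : ℕ∞} {f : P × ℝ → E} (hf : ContDiff ℝ k f) (a b : ℝ) :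
    ContDiff ℝ k fun p => ∫ t in a..b, f (p, t) :=
  contDiff_iff_forall_nat_le.2 fun m hm =>
    contDiff_nat_intervalIntegral m (hf.of_le (by exact_mod_cast hm)) a b

end ParametricIntegral

section SymmetricDerivatives

variable {E F : Type*} [NormedAddCommGroup E] [NormedSpace ℝ E]
  [NormedAddCommGroup F] [NormedSpace ℝ F]

theorem fderiv_fderiv_apply_comm {f : E → F} {x : E} (hf : ContDiffAt ℝ 2 f x)
    (u v : E) :
    fderiv ℝ (fun q => fderiv ℝ f q v) x u = fderiv ℝ (fun q => fderiv ℝ f q u) x v := by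
  have hf' : DifferentiableAt ℝ (fderiv ℝ f) x :=
    (hf.fderiv_right (m := 1) le_rfl).differentiableAt one_ne_zero
  have happly (w : E) :
      fderiv ℝ (fun q => fderiv ℝ f q w) x = (fderiv ℝ (fderiv ℝ f) x).flip w := by
    rw [fderiv_clm_apply hf' (differentiableAt_const w)]
    simp
  simpa only [happly, ContinuousLinearMap.flip_apply] using hf.isSymmSndFDerivAt (by simp) u v

theorem fderiv_fderiv_fderiv_apply_comm {f : E → F} {x : E} (hf : ContDiffAt ℝ 3 f x) (u v w : E) :
    fderiv ℝ (fun q => fderiv ℝ (fun r => fderiv ℝ f r w) q v) x u =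
      fderiv ℝ (fun q => fderiv ℝ (fun r => fderiv ℝ f r w) q u) x v :=
  fderiv_fderiv_apply_comm
    ((hf.fderiv_right (m := 2) (by norm_num)).clm_apply contDiffAt_const) u v

end SymmetricDerivatives

section PoincareLemma

universe u

variable {E Z F : Type u} [NormedAddCommGroup E] [NormedSpace ℝ E] [NormedAddCommGroup Z]
  [NormedSpace ℝ Z] [NormedAddCommGroup F] [NormedSpace ℝ F] [CompleteSpace F]

theorem hasFDerivAt_integral_segment_of_fderiv_symmetric {ω : E → E →L[ℝ] F}
    (hω : Differentiable ℝ ω) (hsymm : ∀ x u v, fderiv ℝ ω x u v = fderiv ℝ ω x v u) (x : E) :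
    HasFDerivAt (fun x => ∫ t in (0 : ℝ)..1, ω (t • x) x) (ω x) x := by
  have h := convex_univ.hasFDerivWithinAt_curveIntegral_segment_of_hasFDerivWithinAt_symmetric
    (fun y _ => (hω y).hasFDerivAt.hasFDerivWithinAt) (fun y _ u _ v _ => hsymm y u v)
    (Set.mem_univ 0) (Set.mem_univ x)
  simpa [curveIntegral_segment, AffineMap.lineMap_apply] using h.hasFDerivAt_of_univ

theorem exists_contDiff_partial_primitive {k : ℕ∞} (hk : k ≠ 0) {ω : E × Z → E →L[ℝ] F}
    (hω : ContDiff ℝ k ω)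
    (hsymm : ∀ p u v, fderiv ℝ ω p (u, 0) v = fderiv ℝ ω p (v, 0) u) :
    ∃ g : E × Z → F, ContDiff ℝ k g ∧ ∀ p u, fderiv ℝ g p (u, 0) = ω p u := by
  have hk' : (k : WithTop ℕ∞) ≠ 0 := by exact_mod_cast hk
  set g : E × Z → F := fun p => ∫ t in (0 : ℝ)..1, ω (t • p.1, p.2) p.1
  have hg : ContDiff ℝ k g :=
    contDiff_intervalIntegral
      (f := fun q : (E × Z) × ℝ => ω (q.2 • q.1.1, q.1.2) q.1.1)
      ((hω.comp (by fun_prop)).clm_apply (by fun_prop)) 0 1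
  refine ⟨g, hg, fun ⟨x, z⟩ u => ?_⟩
  have hslice (y : E) : HasFDerivAt (fun y => ω (y, z))
      ((fderiv ℝ ω (y, z)).comp (ContinuousLinearMap.inl ℝ E Z)) y :=
    (hω.differentiable hk' (y, z)).hasFDerivAt.comp y (hasFDerivAt_prodMk_left y z)
  have hprim : HasFDerivAt (fun y => g (y, z)) (ω (x, z)) x :=
    hasFDerivAt_integral_segment_of_fderiv_symmetric (fun y => (hslice y).differentiableAt)
      (fun y u v => by simpa [(hslice y).fderiv] using hsymm (y, z) u v) x
  have hchain : HasFDerivAt (fun y => g (y, z))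
      ((fderiv ℝ g (x, z)).comp (ContinuousLinearMap.inl ℝ E Z)) x :=
    HasFDerivAt.comp (g := g) x (hg.differentiable hk' (x, z)).hasFDerivAt
      (hasFDerivAt_prodMk_left x z)
  exact DFunLike.congr_fun (hchain.unique hprim) u

end PoincareLemma

section ParacontactStructure

variable {n : ℕ} {F : Fin n → Fin n → Pt n → ℝ}

theorem coframe_ext {p v w : Pt n} (hA : ∀ α, thA n α v = thA n α w)
    (hB : ∀ α, thB n F α p v = thB n F α p w) (hη : etaP n v = etaP n w) : v = w := by
  have h1 : v.1 = w.1 := funext hA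
  have h2 : v.2.1 = w.2.1 := funext fun α => by simpa [thB, h1] using hB α
  exact Prod.ext h1 (Prod.ext h2 hη)

theorem phiP_eq (p v : Pt n) :
    phiP n F p v = (-v.1, fun ω => thB n F ω p v + ∑ α, v.1 α * F ω α p, 0) := by
  refine Prod.ext ?_ (Prod.ext ?_ ?_)
  · ext i
    simp [phiP, Prod.fst_sum, enV, eaF, thA, Pi.single_apply]
  · ext i
    simp [phiP, Prod.fst_sum, Prod.snd_sum, enV, eaF, thA, Pi.single_apply]
  · simp [phiP, Prod.snd_sum, enV, eaF]

theorem thA_phiP (p v : Pt n) (α : Fin n) : thA n α (phiP n F p v) = -thA n α v := by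
  simp [phiP_eq, thA]

theorem thB_phiP (p v : Pt n) (α : Fin n) : thB n F α p (phiP n F p v) = thB n F α p v := by
  rw [phiP_eq]
  simp [thB, mul_comm]

theorem etaP_phiP (p v : Pt n) : etaP n (phiP n F p v) = 0 := by
  simp [phiP_eq, etaP]

theorem phiP_phiP (p v : Pt n) : phiP n F p (phiP n F p v) = v - etaP n v • dzV n := by
  refine coframe_ext (F := F) (p := p) (fun α => ?_) (fun α => ?_) ?_
  · rw [thA_phiP, thA_phiP, neg_neg]
    simp [thA, dzV]
  · rw [thB_phiP, thB_phiP]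
    simp [thB, dzV]
  · rw [etaP_phiP]
    simp [etaP, dzV]

theorem phiP_dzV (p : Pt n) : phiP n F p (dzV n) = 0 := by
  refine coframe_ext (F := F) (p := p) (fun α => ?_) (fun α => ?_) ?_
  · rw [thA_phiP]
    simp [thA, dzV]
  · rw [thB_phiP]
    simp [thB, dzV]
  · rw [etaP_phiP]
    simp [etaP]

theorem gP_phiP_phiP (p v w : Pt n) :
    gP n F p (phiP n F p v) (phiP n F p w) = -gP n F p v w + etaP n v * etaP n w := by
  have hη (u : Pt n) : (phiP n F p u).2.2 = 0 := etaP_phiP p u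
  simp only [gP, thA_phiP, thB_phiP, hη, etaP, neg_mul, mul_neg, Finset.sum_add_distrib,
    Finset.sum_neg_distrib]
  ring

theorem PhiForm_eq_sum_coframe (p v w : Pt n) :
    PhiForm n F p v w =
      ∑ α, (thA n α v * thB n F α p w - thB n F α p v * thA n α w) := by
  have hη : (phiP n F p w).2.2 = 0 := etaP_phiP p w
  simp only [PhiForm, gP, thA_phiP, thB_phiP, hη, mul_zero, add_zero, mul_neg, sub_eq_add_neg]

theorem PhiForm_eq_of_symm {p : Pt n} (hF : ∀ α β, F α β p = F β α p) (v w : Pt n) :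
    PhiForm n F p v w = ∑ α, (v.1 α * w.2.1 α - v.2.1 α * w.1 α) := by
  have hcancel : ∑ α, v.1 α * ∑ ω, F α ω p * w.1 ω = ∑ α, (∑ ω, F α ω p * v.1 ω) * w.1 α := by
    simp only [Finset.mul_sum, Finset.sum_mul]
    rw [Finset.sum_comm]
    refine Finset.sum_congr rfl fun α _ => Finset.sum_congr rfl fun β _ => ?_
    rw [hF]
    ring
  simp only [PhiForm_eq_sum_coframe, thA, thB, mul_add, add_mul, Finset.sum_sub_distrib,
    Finset.sum_add_distrib, hcancel]
  ring

end ParacontactStructure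

/-- Functions of the coordinates `x^α` and `z` only. -/
def IndepOfY {n : ℕ} (f : Pt n → ℝ) : Prop :=
  ∀ p q : Pt n, p.1 = q.1 → p.2.2 = q.2.2 → f p = f q

section Involutivity

variable {n : ℕ} {F : Fin n → Fin n → Pt n → ℝ}

theorem mem_span_eaF_iff {p v : Pt n} :
    v ∈ Submodule.span ℝ (Set.range fun γ => eaF n F γ p) ↔
      (∀ α, thB n F α p v = 0) ∧ etaP n v = 0 := by
  rw [Submodule.mem_span_range_iff_exists_fun]
  constructor
  · rintro ⟨c, rfl⟩
    refine ⟨fun α => ?_, ?_⟩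
    · simp [thB, eaF, Prod.fst_sum, Prod.snd_sum, Pi.single_apply, mul_comm]
    · simp [etaP, eaF, Prod.snd_sum]
  · rintro ⟨hB, hη⟩
    refine ⟨fun γ => thA n γ v, coframe_ext (F := F) (p := p) (fun α => ?_) (fun α => ?_) ?_⟩
    · simp [thA, eaF, Prod.fst_sum, Pi.single_apply]
    · rw [hB]
      simp [thA, thB, eaF, Prod.fst_sum, Prod.snd_sum, Pi.single_apply, mul_comm]
    · rw [hη]
      simp [etaP, eaF, Prod.snd_sum]

theorem fderiv_apply_eq_of_indepOfY {f : Pt n → ℝ} {p : Pt n} (hf : DifferentiableAt ℝ f p)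
    (hfy : IndepOfY f) (a b : Fin n → ℝ) (c : ℝ) :
    fderiv ℝ f p (a, b, c) = fderiv ℝ f p (a, 0, c) := by
  rw [← hf.lineDeriv_eq_fderiv, ← hf.lineDeriv_eq_fderiv]
  unfold lineDeriv
  congr 1
  ext t
  exact hfy _ _ (by simp) (by simp)

theorem hasFDerivAt_eaF {p : Pt n} {γ : Fin n} (hF : ∀ ω, DifferentiableAt ℝ (F ω γ) p) :
    HasFDerivAt (eaF n F γ) ((0 : Pt n →L[ℝ] (Fin n → ℝ)).prod
      ((ContinuousLinearMap.pi fun ω => -fderiv ℝ (F ω γ) p).prod 0)) p :=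
  (hasFDerivAt_const _ _).prodMk
    ((hasFDerivAt_pi.2 fun ω => (hF ω).hasFDerivAt.neg).prodMk (hasFDerivAt_const _ _))

theorem brk_eaF (hF : ∀ α β, Differentiable ℝ (F α β)) (hFy : ∀ α β, IndepOfY (F α β))
    (α β : Fin n) (p : Pt n) :
    brk n (eaF n F α) (eaF n F β) p = (0, fun ω =>
      fderiv ℝ (F ω α) p (eaV n β) - fderiv ℝ (F ω β) p (eaV n α), 0) := by
  have happly (ω γ δ : Fin n) : fderiv ℝ (F ω γ) p (eaF n F δ p) = fderiv ℝ (F ω γ) p (eaV n δ) :=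
    fderiv_apply_eq_of_indepOfY (hF ω γ p) (hFy ω γ) _ _ _
  rw [brk, (hasFDerivAt_eaF fun ω => hF ω β p).fderiv, (hasFDerivAt_eaF fun ω => hF ω α p).fderiv]
  refine Prod.ext (sub_zero _) (Prod.ext (funext fun ω => ?_) (sub_zero _))
  simp [happly, neg_add_eq_sub]

theorem brk_eaF_mem_span_iff
    (hF : ∀ α β, Differentiable ℝ (F α β)) (hFy : ∀ α β, IndepOfY (F α β))
    (α β : Fin n) (p : Pt n) :
    brk n (eaF n F α) (eaF n F β) p ∈ Submodule.span ℝ (Set.range fun γ => eaF n F γ p) ↔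
      ∀ ω, fderiv ℝ (F ω β) p (eaV n α) = fderiv ℝ (F ω α) p (eaV n β) := by
  rw [mem_span_eaF_iff, brk_eaF hF hFy]
  simp [thB, etaP, sub_eq_zero, eq_comm (a := fderiv ℝ (F _ β) p _)]

end Involutivity

section Potential

variable {n : ℕ}

theorem mk_zero_eq_sum_smul_eaV (u : Fin n → ℝ) : ((u, 0) : Pt n) = ∑ α, u α • eaV n α := by
  refine Prod.ext (funext fun i => ?_) ?_
  · simp [eaV, Prod.fst_sum, Pi.single_apply]
  · simp [eaV, Prod.snd_sum, ← Prod.zero_eq_mk]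

/-- The 1-form `∑ A_β dx^β` in the `x`-directions, as a functional on the `x`-space alone: its
`dy` and `dz` components are left out, so that it is closed as soon as `∂_α A_β = ∂_β A_α`. -/
def xForm (A : Fin n → Pt n → ℝ) (p : Pt n) : (Fin n → ℝ) →L[ℝ] ℝ :=
  ∑ β, A β p • ContinuousLinearMap.proj (R := ℝ) (φ := fun _ : Fin n => ℝ) β

theorem contDiff_xForm {k : WithTop ℕ∞} {A : Fin n → Pt n → ℝ} (hA : ∀ α, ContDiff ℝ k (A α)) :
    ContDiff ℝ k (xForm A) :=
  ContDiff.sum fun β _ => (hA β).smul contDiff_const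

theorem fderiv_xForm_apply {A : Fin n → Pt n → ℝ} {p : Pt n}
    (hA : ∀ β, DifferentiableAt ℝ (A β) p) (w : Pt n) (v : Fin n → ℝ) :
    fderiv ℝ (xForm A) p w v = ∑ β, fderiv ℝ (A β) p w * v β := by
  have h : HasFDerivAt (xForm A) _ p := HasFDerivAt.fun_sum (u := Finset.univ) fun β _ =>
    (hA β).hasFDerivAt.smul_const
      (ContinuousLinearMap.proj (R := ℝ) (φ := fun _ : Fin n => ℝ) β)
  simp [h.fderiv]

theorem fderiv_xForm_symm {A : Fin n → Pt n → ℝ} (hA : ∀ β, Differentiable ℝ (A β))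
    (hclosed : ∀ α β p, fderiv ℝ (A β) p (eaV n α) = fderiv ℝ (A α) p (eaV n β))
    (p : Pt n) (u v : Fin n → ℝ) :
    fderiv ℝ (xForm A) p (u, 0) v = fderiv ℝ (xForm A) p (v, 0) u := by
  have hexpand (u v : Fin n → ℝ) : fderiv ℝ (xForm A) p (u, 0) v =
      ∑ β, ∑ α, u α * fderiv ℝ (A β) p (eaV n α) * v β := by
    rw [fderiv_xForm_apply fun β => hA β p, mk_zero_eq_sum_smul_eaV]
    simp only [map_sum, map_smul, smul_eq_mul, Finset.sum_mul]
  rw [hexpand, hexpand, Finset.sum_comm]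
  refine Finset.sum_congr rfl fun α _ => Finset.sum_congr rfl fun β _ => ?_
  rw [hclosed]
  ring

theorem exists_primitive_indepOfY {k : ℕ∞} (hk : k ≠ 0) {A : Fin n → Pt n → ℝ}
    (hA : ∀ α, ContDiff ℝ k (A α)) (hAy : ∀ α, IndepOfY (A α))
    (hclosed : ∀ α β p, fderiv ℝ (A β) p (eaV n α) = fderiv ℝ (A α) p (eaV n β)) :
    ∃ G : Pt n → ℝ, ContDiff ℝ k G ∧ IndepOfY G ∧ ∀ α p, fderiv ℝ G p (eaV n α) = A α p := by
  have hk' : (k : WithTop ℕ∞) ≠ 0 := by exact_mod_cast hk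
  obtain ⟨g, hg, hg'⟩ := exists_contDiff_partial_primitive hk (contDiff_xForm hA)
    (fderiv_xForm_symm (fun β => (hA β).differentiable hk') hclosed)
  -- Composing with `S : (x, y, z) ↦ (x, 0, z)` makes the primitive independent of `y`.
  let S : Pt n →L[ℝ] Pt n := (ContinuousLinearMap.fst ℝ _ _).prod
    ((0 : Pt n →L[ℝ] (Fin n → ℝ)).prod
      ((ContinuousLinearMap.snd ℝ _ _).comp (ContinuousLinearMap.snd ℝ _ _)))
  refine ⟨g ∘ S, hg.comp S.contDiff, fun p q h₁ h₂ => ?_, fun α p => ?_⟩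
  · exact congrArg g (Prod.ext h₁ (Prod.ext rfl h₂))
  · calc fderiv ℝ (g ∘ S) p (eaV n α) = fderiv ℝ g (S p) (Pi.single α 1, 0) := by
          rw [fderiv_comp p (hg.differentiable hk' _) S.differentiableAt, S.fderiv]
          rfl
      _ = A α (S p) := by simp [hg', xForm, Pi.single_apply]
      _ = A α p := hAy α _ _ rfl rfl

theorem exists_hessian_potential {k : ℕ∞} (hk : k ≠ 0) {F : Fin n → Fin n → Pt n → ℝ}
    (hFsym : ∀ α β, F α β = F β α)
    (hFy : ∀ α β, IndepOfY (F α β))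
    (hF : ∀ α β, ContDiff ℝ k (F α β))
    (hclosed : ∀ α β p ω, fderiv ℝ (F ω β) p (eaV n α) = fderiv ℝ (F ω α) p (eaV n β)) :
    ∃ H : Pt n → ℝ, ContDiff ℝ k H ∧ IndepOfY H ∧
      ∀ α β p, F β α p = fderiv ℝ (fun q => fderiv ℝ H q (eaV n β)) p (eaV n α) := by
  choose G hG hGy hG' using fun ω => exists_primitive_indepOfY hk (hF ω) (hFy ω)
    fun α β p => hclosed α β p ω
  obtain ⟨H, hH, hHy, hH'⟩ := exists_primitive_indepOfY hk hG hGy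
    fun α β p => by rw [hG', hG', hFsym]
  exact ⟨H, hH, hHy, fun α β p => by simp only [hH', hG']⟩

end Potential

/-- for symmetric `F^α_β = F^β_α` depending only on the `x^α` and
`z`, the above structure is almost para-cosymplectic (`dη = 0`, `dΦ = 0`,
indeed `Φ = 2Σ dx^α ∧ dy_α` has constant coefficients), and the
eigendistribution `D⁻ = span(e_α)` is involutive iff
`F^β_α = ∂²H/∂x^α∂x^β` for some function `H` of the `x^α` and `z` only. -/
theorem stmt19 (n : ℕ) (F : Fin n → Fin n → Pt n → ℝ)
    (hFsym : ∀ α β, F α β = F β α)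
    (hFxz : ∀ α β (p q : Pt n), p.1 = q.1 → p.2.2 = q.2.2 → F α β p = F α β q)
    (hFsmooth : ∀ α β, ContDiff ℝ (⊤ : ℕ∞) (F α β)) :
    -- almost paracontact metric structure
    (∀ p v, phiP n F p (phiP n F p v) = v - etaP n v • dzV n) ∧
    (∀ _p : Pt n, etaP n (dzV n) = 1) ∧
    (∀ p, phiP n F p (dzV n) = 0) ∧
    (∀ p v, etaP n (phiP n F p v) = 0) ∧
    (∀ p v w, gP n F p (phiP n F p v) (phiP n F p w)
        = -(gP n F p v w) + etaP n v * etaP n w) ∧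
    -- dη = 0 (η = dz has constant coefficients)
    (∀ p (v w : Pt n),
        (1 / 2) * (fderiv ℝ (fun _ : Pt n => etaP n w) p v
          - fderiv ℝ (fun _ : Pt n => etaP n v) p w) = 0) ∧
    -- Φ = 2Σ dx^α ∧ dy_α : constant coefficients ...
    (∀ p v w, PhiForm n F p v w = ∑ α, (v.1 α * w.2.1 α - v.2.1 α * w.1 α)) ∧
    -- ... hence dΦ = 0 (checked on constant vector fields)
    (∀ p (u v w : Pt n),
        fderiv ℝ (fun q => PhiForm n F q v w) p u
          - fderiv ℝ (fun q => PhiForm n F q u w) p v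
          + fderiv ℝ (fun q => PhiForm n F q u v) p w = 0) ∧
    -- involutivity of D⁻ ↔ existence of the potential H
    ((∀ (α β : Fin n) (p : Pt n),
        brk n (eaF n F α) (eaF n F β) p
          ∈ Submodule.span ℝ (Set.range fun γ : Fin n => eaF n F γ p)) ↔
      (∃ Hf : Pt n → ℝ, ContDiff ℝ (⊤ : ℕ∞) Hf ∧
        (∀ p q : Pt n, p.1 = q.1 → p.2.2 = q.2.2 → Hf p = Hf q) ∧
        ∀ (α β : Fin n) (p : Pt n),
          F β α p = fderiv ℝ (fun q => fderiv ℝ Hf q (eaV n β)) p (eaV n α))) := by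
  have hΦ (p v w : Pt n) := PhiForm_eq_of_symm (p := p) (fun α β => congrFun (hFsym α β) p) v w
  refine ⟨phiP_phiP, fun _ => rfl, phiP_dzV, etaP_phiP, gP_phiP_phiP, fun p v w => by simp,
    hΦ, fun p u v w => by simp [hΦ], ?_⟩
  simp only [brk_eaF_mem_span_iff (fun α β => (hFsmooth α β).differentiable (by simp)) hFxz]
  refine ⟨exists_hessian_potential (by simp) hFsym hFxz hFsmooth, ?_⟩
  rintro ⟨H, hH, -, hHess⟩ α β p ω
  rw [funext (hHess β ω), funext (hHess α ω)]
  exact fderiv_fderiv_fderiv_apply_comm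
    (hH.of_le (WithTop.coe_le_coe.2 (le_top : (3 : ℕ∞) ≤ ⊤))).contDiffAt _ _ _

end Stmt19
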